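/- Let C be a 2-reduced cocommutative dg coalgebra over ℚ. For every left dg C-comodule N, the unit N → t_* t^! N of the (t^! ⊣ t_*) adjunction, n ↦ n₍₀₎ ⊗ 1 ⊗ n₍₁₎, is a t-equivalence; that is, the induced map t^!N → t^!(t_* t^! N) is a quasi-isomorphism of ΩC-modules. -/

import Mathlib

open scoped TensorProduct

noncomputable section

/-- A homologically graded differential graded `ℚ`-vector space (chain complex of
`ℚ`-vector spaces presented as a graded module with a degree `-1` square-zero differential). -/
structure DGVect : Type 1 where
  carrier : Type
  [isAddCommGroup : AddCommGroup carrier]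
  [isModule : Module ℚ carrier]
  grading : ℤ → Submodule ℚ carrier
  [isDecomp : DirectSum.Decomposition grading]
  d : carrier →ₗ[ℚ] carrier
  d_mem : ∀ (n : ℤ), ∀ x ∈ grading n, d x ∈ grading (n - 1)
  d_sq : d.comp d = 0

attribute [instance] DGVect.isAddCommGroup DGVect.isModule DGVect.isDecomp

/-- The operator acting on the degree `n` graded component by `(-1)^(k*n)`. -/
def signOpOf {V : Type} [AddCommGroup V] [Module ℚ V] (g : ℤ → Submodule ℚ V)
    [DirectSum.Decomposition g] (k : ℤ) : V →ₗ[ℚ] V :=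
  (DirectSum.toModule ℚ ℤ V fun n => ((-1 : ℚ) ^ (k * n)) • (g n).subtype).comp
    (DirectSum.decomposeLinearEquiv g).toLinearMap

/-- The Koszul parity operator, acting by `(-1)^n` in degree `n`. -/
def parityOf {V : Type} [AddCommGroup V] [Module ℚ V] (g : ℤ → Submodule ℚ V)
    [DirectSum.Decomposition g] : V →ₗ[ℚ] V := signOpOf g 1

def DGVect.parity (V : DGVect) : V.carrier →ₗ[ℚ] V.carrier := parityOf V.grading

/-- A graded object is bounded below if it vanishes in all sufficiently negative degrees. -/
def DGVect.BoundedBelow (V : DGVect) : Prop := ∃ b : ℤ, ∀ n : ℤ, n < b → V.grading n = ⊥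

/-- The Koszul signed braiding `v ⊗ w ↦ (-1)^{|v||w|} w ⊗ v` of graded vector spaces. -/
def kSwapOf {V W : Type} [AddCommGroup V] [Module ℚ V] [AddCommGroup W] [Module ℚ W]
    (gV : ℤ → Submodule ℚ V) (gW : ℤ → Submodule ℚ W)
    [DirectSum.Decomposition gV] [DirectSum.Decomposition gW] :
    V ⊗[ℚ] W →ₗ[ℚ] W ⊗[ℚ] V :=
  TensorProduct.lift
    ((DirectSum.toModule ℚ ℤ (W →ₗ[ℚ] W ⊗[ℚ] V) (fun i =>
        (((DirectSum.toModule ℚ ℤ (V →ₗ[ℚ] W ⊗[ℚ] V) (fun j =>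
              ((-1 : ℚ) ^ (i * j)) • ((TensorProduct.mk ℚ W V).comp (gW j).subtype))).comp
            (DirectSum.decomposeLinearEquiv gW).toLinearMap).flip).comp
          (gV i).subtype)).comp
      (DirectSum.decomposeLinearEquiv gV).toLinearMap)

/-- The degree `n` part of the tensor product grading:
the span of the homogeneous tensors of total degree `n`. -/
def tensorGrading {V W : Type} [AddCommGroup V] [Module ℚ V] [AddCommGroup W] [Module ℚ W]
    (gV : ℤ → Submodule ℚ V) (gW : ℤ → Submodule ℚ W) (n : ℤ) : Submodule ℚ (V ⊗[ℚ] W) :=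
  ⨆ p : {p : ℤ × ℤ // p.1 + p.2 = n},
    LinearMap.range (TensorProduct.map (gV p.1.1).subtype (gW p.1.2).subtype)

/-- `f` is a quasi-isomorphism from the complex `(V, dV)` to the complex `(W, dW)`:
it induces a bijection on homology (`ker d / im d`). -/
def IsQuasiIso {V W : Type} [AddCommGroup V] [Module ℚ V] [AddCommGroup W] [Module ℚ W]
    (dV : V →ₗ[ℚ] V) (dW : W →ₗ[ℚ] W) (f : V →ₗ[ℚ] W) : Prop :=
  (∀ x : V, dV x = 0 → (∃ y, f x = dW y) → ∃ z, x = dV z) ∧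
  (∀ w : W, dW w = 0 → ∃ x, dV x = 0 ∧ ∃ y, w - f x = dW y)

/-- A differential graded algebra over `ℚ`. -/
structure DGAlgebra extends DGVect where
  mul : carrier →ₗ[ℚ] carrier →ₗ[ℚ] carrier
  one : carrier
  one_mem : one ∈ grading 0
  mul_mem : ∀ (i j : ℤ) (x y : carrier), x ∈ grading i → y ∈ grading j →
    mul x y ∈ grading (i + j)
  mul_assoc' : ∀ x y z : carrier, mul (mul x y) z = mul x (mul y z)
  one_mul' : ∀ x : carrier, mul one x = x
  mul_one' : ∀ x : carrier, mul x one = x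
  leibniz : ∀ (i : ℤ) (x y : carrier), x ∈ grading i →
    d (mul x y) = mul (d x) y + ((-1 : ℚ) ^ i) • mul x (d y)

/-- The multiplication of a dg algebra as a map out of the tensor product. -/
def DGAlgebra.mulMap (A : DGAlgebra) : A.carrier ⊗[ℚ] A.carrier →ₗ[ℚ] A.carrier :=
  TensorProduct.lift A.mul

/-- A dg algebra is connective if it is concentrated in non-negative degrees. -/
def DGAlgebra.Connective (A : DGAlgebra) : Prop := ∀ n : ℤ, n < 0 → A.grading n = ⊥

/-- A (coassociative counital) differential graded coalgebra over `ℚ`,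
non-negatively graded. -/
structure DGCoalgebra extends DGVect where
  comul : carrier →ₗ[ℚ] carrier ⊗[ℚ] carrier
  counit : carrier →ₗ[ℚ] ℚ
  nonneg : ∀ n : ℤ, n < 0 → grading n = ⊥
  comul_mem : ∀ (n : ℤ), ∀ x ∈ grading n, comul x ∈ tensorGrading grading grading n
  counit_zero : ∀ (n : ℤ), n ≠ 0 → ∀ x ∈ grading n, counit x = 0
  coassoc : (TensorProduct.assoc ℚ carrier carrier carrier).toLinearMap.comp
      ((TensorProduct.map comul LinearMap.id).comp comul)
      = (TensorProduct.map LinearMap.id comul).comp comul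
  counit_comul_left : (TensorProduct.lid ℚ carrier).toLinearMap.comp
      ((TensorProduct.map counit LinearMap.id).comp comul) = LinearMap.id
  counit_comul_right : (TensorProduct.rid ℚ carrier).toLinearMap.comp
      ((TensorProduct.map LinearMap.id counit).comp comul) = LinearMap.id
  comul_chain : comul.comp d
      = (TensorProduct.map d LinearMap.id + TensorProduct.map (parityOf grading) d).comp comul
  counit_chain : counit.comp d = 0

/-- Cocommutativity: the comultiplication is invariant under the Koszul signed twist. -/
def DGCoalgebra.Cocomm (C : DGCoalgebra) : Prop :=
  (kSwapOf C.grading C.grading).comp C.comul = C.comul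

/-- A coaugmented dg coalgebra: a dg coalgebra with a coaugmentation `η : ℚ → C`,
recorded by the grouplike element `one = η 1` in degree `0`. -/
structure CoaugDGCoalgebra extends DGCoalgebra where
  one : carrier
  one_mem : one ∈ grading 0
  counit_one : counit one = 1
  comul_one : comul one = one ⊗ₜ[ℚ] one

/-- A coaugmented dg coalgebra is 2-reduced if `C₀ = ℚ` (spanned by the coaugmentation)
and `C₁ = 0`. -/
def CoaugDGCoalgebra.TwoReduced (C : CoaugDGCoalgebra) : Prop :=
  C.grading 0 = Submodule.span ℚ {C.one} ∧ C.grading 1 = ⊥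

/-- A twisting chain `τ : C ⇝ A`: a degree `-1` linear map satisfying
`d(τc) = -τ(dc) - (-1)^{|c₍₀₎|} τ(c₍₀₎)·τ(c₍₁₎)`. -/
structure TwistingChain (C : DGCoalgebra) (A : DGAlgebra) where
  toFun : C.carrier →ₗ[ℚ] A.carrier
  mem : ∀ (n : ℤ), ∀ x ∈ C.grading n, toFun x ∈ A.grading (n - 1)
  twist : A.d.comp toFun + toFun.comp C.d
      + A.mulMap.comp ((TensorProduct.map (toFun.comp (parityOf C.grading)) toFun).comp C.comul)
      = 0

/-- A left dg module over a dg algebra. -/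
structure DGModule (A : DGAlgebra) extends DGVect where
  smul : A.carrier →ₗ[ℚ] carrier →ₗ[ℚ] carrier
  smul_mem : ∀ (i j : ℤ) (a : A.carrier) (x : carrier), a ∈ A.grading i → x ∈ grading j →
    smul a x ∈ grading (i + j)
  one_smul' : ∀ x : carrier, smul A.one x = x
  mul_smul' : ∀ (a b : A.carrier) (x : carrier), smul (A.mul a b) x = smul a (smul b x)
  leibniz : ∀ (i : ℤ) (a : A.carrier) (x : carrier), a ∈ A.grading i →
    d (smul a x) = smul (A.d a) x + ((-1 : ℚ) ^ i) • smul a (d x)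

/-- The action of a dg module as a map out of the tensor product. -/
def DGModule.actionMap {A : DGAlgebra} (M : DGModule A) :
    A.carrier ⊗[ℚ] M.carrier →ₗ[ℚ] M.carrier := TensorProduct.lift M.smul

/-- A left dg comodule over a dg coalgebra. -/
structure DGComodule (C : DGCoalgebra) extends DGVect where
  coact : carrier →ₗ[ℚ] C.carrier ⊗[ℚ] carrier
  coact_mem : ∀ (n : ℤ), ∀ x ∈ grading n, coact x ∈ tensorGrading C.grading grading n
  coassoc : (TensorProduct.assoc ℚ C.carrier C.carrier carrier).toLinearMap.comp
      ((TensorProduct.map C.comul LinearMap.id).comp coact)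
      = (TensorProduct.map LinearMap.id coact).comp coact
  counit_coact : (TensorProduct.lid ℚ carrier).toLinearMap.comp
      ((TensorProduct.map C.counit LinearMap.id).comp coact) = LinearMap.id
  coact_chain : coact.comp d
      = (TensorProduct.map C.d LinearMap.id + TensorProduct.map (parityOf C.grading) d).comp coact

/-- Morphisms of dg modules: degree `0` graded chain maps commuting with the action. -/
def IsModuleHom (A : DGAlgebra) (M M' : DGModule A)
    (g : M.carrier →ₗ[ℚ] M'.carrier) : Prop :=
  (∀ (n : ℤ), ∀ x ∈ M.grading n, g x ∈ M'.grading n) ∧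
  g.comp M.d = M'.d.comp g ∧
  g.comp M.actionMap = M'.actionMap.comp (TensorProduct.map LinearMap.id g)

/-- Morphisms of dg comodules: degree `0` graded chain maps commuting with the coaction. -/
def IsComoduleHom (C : DGCoalgebra) (N N' : DGComodule C)
    (f : N.carrier →ₗ[ℚ] N'.carrier) : Prop :=
  (∀ (n : ℤ), ∀ x ∈ N.grading n, f x ∈ N'.grading n) ∧
  f.comp N.d = N'.d.comp f ∧
  (TensorProduct.map LinearMap.id f).comp N.coact = N'.coact.comp f

/-- The `A`-action on a twisted extension `A ⊗_τ N`: multiplication on the first factor. -/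
def extAction (A : DGAlgebra) (N : Type) [AddCommGroup N] [Module ℚ N] :
    A.carrier ⊗[ℚ] (A.carrier ⊗[ℚ] N) →ₗ[ℚ] A.carrier ⊗[ℚ] N :=
  (TensorProduct.map A.mulMap LinearMap.id).comp
    (TensorProduct.assoc ℚ A.carrier A.carrier N).symm.toLinearMap

/-- The differential of the twisted extension `A ⊗_τ N`:
`d(a ⊗ n) = da ⊗ n + (-1)^{|a|} a ⊗ dn - (-1)^{|a|} a·τ(n₍₀₎) ⊗ n₍₁₎`
for a `C`-comodule `(N, dN, ρ)`. -/
def extDiff (C : DGCoalgebra) (A : DGAlgebra) (τ : TwistingChain C A)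
    (N : Type) [AddCommGroup N] [Module ℚ N]
    (dN : N →ₗ[ℚ] N) (ρ : N →ₗ[ℚ] C.carrier ⊗[ℚ] N) :
    A.carrier ⊗[ℚ] N →ₗ[ℚ] A.carrier ⊗[ℚ] N :=
  TensorProduct.map A.d LinearMap.id + TensorProduct.map (parityOf A.grading) dN
    - (TensorProduct.map
        (A.mulMap.comp (TensorProduct.map (parityOf A.grading) τ.toFun)) LinearMap.id).comp
        ((TensorProduct.assoc ℚ A.carrier C.carrier N).symm.toLinearMap.comp
          (TensorProduct.map LinearMap.id ρ))

/-- The `C`-coaction on a twisted coextension `C ⊗^τ M`, namely `Δ ⊗ id`. -/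
def coextCoact (C : DGCoalgebra) (M : Type) [AddCommGroup M] [Module ℚ M] :
    C.carrier ⊗[ℚ] M →ₗ[ℚ] C.carrier ⊗[ℚ] (C.carrier ⊗[ℚ] M) :=
  (TensorProduct.assoc ℚ C.carrier C.carrier M).toLinearMap.comp
    (TensorProduct.map C.comul LinearMap.id)

/-- The differential of the twisted coextension `C ⊗^τ M`, expressed in terms of the map
`tact : C ⊗ M → M`, `c ⊗ m ↦ τ(c)·m`:
`d(c ⊗ m) = dc ⊗ m + (-1)^{|c|} c ⊗ dm + (-1)^{|c₍₀₎|} c₍₀₎ ⊗ τ(c₍₁₎)·m`. -/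
def coextDiffFrom (C : DGCoalgebra) (M : Type) [AddCommGroup M] [Module ℚ M]
    (dM : M →ₗ[ℚ] M) (tact : C.carrier ⊗[ℚ] M →ₗ[ℚ] M) :
    C.carrier ⊗[ℚ] M →ₗ[ℚ] C.carrier ⊗[ℚ] M :=
  TensorProduct.map C.d LinearMap.id + TensorProduct.map (parityOf C.grading) dM
    + (TensorProduct.map (parityOf C.grading) tact).comp (coextCoact C M)

/-- The differential of the twisted coextension `C ⊗^τ M` of an `A`-module `(M, dM, act)`. -/
def coextDiff (C : DGCoalgebra) (A : DGAlgebra) (τ : TwistingChain C A)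
    (M : Type) [AddCommGroup M] [Module ℚ M]
    (dM : M →ₗ[ℚ] M) (act : A.carrier ⊗[ℚ] M →ₗ[ℚ] M) :
    C.carrier ⊗[ℚ] M →ₗ[ℚ] C.carrier ⊗[ℚ] M :=
  coextDiffFrom C M dM (act.comp (TensorProduct.map τ.toFun LinearMap.id))

/-- Morphisms of dg algebras. -/
structure DGAlgebraHom (A B : DGAlgebra) where
  toLinearMap : A.carrier →ₗ[ℚ] B.carrier
  mem : ∀ (n : ℤ), ∀ x ∈ A.grading n, toLinearMap x ∈ B.grading n
  chain : toLinearMap.comp A.d = B.d.comp toLinearMap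
  map_one : toLinearMap A.one = B.one
  map_mul : ∀ x y : A.carrier, toLinearMap (A.mul x y) = B.mul (toLinearMap x) (toLinearMap y)

/-- Data exhibiting a dg algebra as the cobar construction `ΩC` of a coaugmented
dg coalgebra `C`, via the universal twisting chain `t : C ⇝ ΩC`:
dg algebra maps `ΩC → A` correspond bijectively to twisting chains `C ⇝ A`
vanishing on the coaugmentation. -/
structure CobarData (C : CoaugDGCoalgebra) where
  alg : DGAlgebra
  t : TwistingChain C.toDGCoalgebra alg
  t_one : t.toFun C.one = 0
  univ : ∀ (A : DGAlgebra) (τ : TwistingChain C.toDGCoalgebra A), τ.toFun C.one = 0 →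
    ∃! F : DGAlgebraHom alg A, F.toLinearMap.comp t.toFun = τ.toFun

/-- A morphism of `C`-comodules is a `t`-equivalence if the induced morphism of twisted
extensions `ΩC ⊗_t N → ΩC ⊗_t M` is a quasi-isomorphism. -/
def IsTEquiv (C : CoaugDGCoalgebra) (Ω : CobarData C) (N M : DGComodule C.toDGCoalgebra)
    (f : N.carrier →ₗ[ℚ] M.carrier) : Prop :=
  IsQuasiIso (extDiff C.toDGCoalgebra Ω.alg Ω.t N.carrier N.d N.coact)
    (extDiff C.toDGCoalgebra Ω.alg Ω.t M.carrier M.d M.coact)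
    (TensorProduct.map LinearMap.id f)

/-! ## Statement 8: the unit of the Koszul adjunction is a `t`-equivalence -/

/-- The unit `N → t_* t^! N = C ⊗^t (ΩC ⊗_t N)`, `n ↦ n₍₀₎ ⊗ 1 ⊗ n₍₁₎`. -/
def cobarUnit (C : CoaugDGCoalgebra) (Ω : CobarData C)
    (N : DGComodule C.toDGCoalgebra) :
    N.carrier →ₗ[ℚ] C.carrier ⊗[ℚ] (Ω.alg.carrier ⊗[ℚ] N.carrier) :=
  (TensorProduct.map LinearMap.id
      ((TensorProduct.mk ℚ Ω.alg.carrier N.carrier) Ω.alg.one)).comp N.coact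

/-!
For a dg `ΩC`-module `M`, write `ε : t^! t_* M → M`, `a ⊗ c ⊗ m ↦ ε(c) a m`, for the counit of the
adjunction `t^! ⊣ t_*`. By the triangle identity, `ε` at `M = t^! N` is a left inverse of `t^!` of
the unit, so it suffices that `ε` is a quasi-isomorphism for every `M`.

The chain map `s : m ↦ 1 ⊗ 1 ⊗ m` is a section of `ε`, and a homotopy `h` between `id` and `s ε` is
sought in the form `h(a ⊗ c ⊗ m) = ε(c) H(a)(m)`. The homotopy equation holds for a derivation `H`,
twisted by the parity, with `H(tc)(m) = -1 ⊗ (c - ε(c)) ⊗ m`: its boundary `∂H` and the commutator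
`a ↦ [a, s]` are both derivations, and they agree on generators.

A twisted derivation with prescribed values on generators is an algebra map from `ΩC` to upper
triangular endomorphisms, so its existence needs `ΩC` to be free as an algebra without differential.
This follows from the universal property of `ΩC` among dg algebras, because forgetting grading and
differential has a right adjoint: a linear map `p : C → R` to an algebra extends to a twisting chain
into the cofree dg algebra on `R`. The twisting equation prescribes `d ∘ p` and is then consistent
because of a Bianchi identity.
-/

/-! ### Graded vector spaces and dg algebras -/

section Grading

variable {V X : Type} [AddCommGroup V] [Module ℚ V] [AddCommGroup X] [Module ℚ X]
  (g : ℤ → Submodule ℚ V) [DirectSum.Decomposition g]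

/-- The linear map out of a graded vector space with prescribed restrictions to the graded
components. -/
def ofComponents (F : ∀ n, g n →ₗ[ℚ] X) : V →ₗ[ℚ] X :=
  DirectSum.toModule ℚ ℤ X F ∘ₗ (DirectSum.decomposeLinearEquiv g).toLinearMap

theorem ofComponents_of_mem (F : ∀ n, g n →ₗ[ℚ] X) {n : ℤ} {x : V} (hx : x ∈ g n) :
    ofComponents g F x = F n ⟨x, hx⟩ := by
  simp only [ofComponents, LinearMap.comp_apply, LinearEquiv.coe_coe,
    DirectSum.decomposeLinearEquiv_apply, DirectSum.decompose_of_mem g hx,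
    ← DirectSum.lof_eq_of ℚ, DirectSum.toModule_lof]

theorem ext_of_mem_grading {F G : V →ₗ[ℚ] X} (h : ∀ n, ∀ x ∈ g n, F x = G x) : F = G :=
  DirectSum.decompose_lhom_ext g fun n => LinearMap.ext fun x => h n x x.2

theorem parityOf_of_mem {n : ℤ} {x : V} (hx : x ∈ g n) : parityOf g x = (-1 : ℚ) ^ n • x := by
  refine (ofComponents_of_mem g _ hx).trans ?_
  simp

@[simp]
theorem parityOf_parityOf (x : V) : parityOf g (parityOf g x) = x := by
  suffices parityOf g ∘ₗ parityOf g = LinearMap.id from LinearMap.congr_fun this x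
  refine ext_of_mem_grading g fun n x hx => ?_
  simp [parityOf_of_mem g hx, smul_smul, ← mul_zpow]

theorem neg_one_zpow_sub_one (n : ℤ) : (-1 : ℚ) ^ (n - 1) = -(-1 : ℚ) ^ n := by
  rw [zpow_sub_one₀ (by norm_num), inv_neg_one, mul_neg_one]

theorem neg_one_zpow_add (i j : ℤ) : (-1 : ℚ) ^ (i + j) = (-1) ^ i * (-1) ^ j :=
  zpow_add₀ (by norm_num) i j

theorem tensorGrading_le_iff {W : Type} [AddCommGroup W] [Module ℚ W]
    {gV : ℤ → Submodule ℚ V} {gW : ℤ → Submodule ℚ W} {n : ℤ} {T : Submodule ℚ (V ⊗[ℚ] W)} :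
    tensorGrading gV gW n ≤ T ↔
      ∀ i j, i + j = n → ∀ x ∈ gV i, ∀ y ∈ gW j, x ⊗ₜ[ℚ] y ∈ T := by
  simp only [tensorGrading, iSup_le_iff, Subtype.forall, Prod.forall,
    TensorProduct.range_map_eq_span_tmul, Submodule.span_le, Set.subset_def, Set.mem_ofPred_eq,
    Submodule.subtype_apply, SetLike.mem_coe]
  constructor
  · exact fun h i j hij x hx y hy => h i j hij _ ⟨⟨x, hx⟩, ⟨y, hy⟩, rfl⟩
  · rintro h i j hij _ ⟨x, y, rfl⟩
    exact h i j hij x x.2 y y.2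

end Grading

namespace DGVect

variable (V : DGVect)

@[simp]
theorem d_d (x : V.carrier) : V.d (V.d x) = 0 :=
  LinearMap.congr_fun V.d_sq x

theorem d_comp_parityOf :
    V.d ∘ₗ parityOf V.grading = -(parityOf V.grading ∘ₗ V.d) := by
  refine ext_of_mem_grading V.grading fun n x hx => ?_
  simp [parityOf_of_mem _ hx, parityOf_of_mem _ (V.d_mem n x hx), neg_one_zpow_sub_one]

theorem d_parityOf (x : V.carrier) : V.d (parityOf V.grading x) = -parityOf V.grading (V.d x) :=
  LinearMap.congr_fun V.d_comp_parityOf x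

end DGVect

namespace DGAlgebra

variable (A : DGAlgebra)

-- Scoped: outside this theory `A.carrier ⊗[ℚ] V` is to be formed with `DGVect.isModule`.
scoped instance instRing : Ring A.carrier :=
  { A.isAddCommGroup with
    mul := fun x y => A.mul x y
    one := A.one
    mul_assoc := A.mul_assoc'
    one_mul := A.one_mul'
    mul_one := A.mul_one'
    left_distrib := fun x y z => map_add (A.mul x) y z
    right_distrib := fun x y z => by
      change A.mul (x + y) z = A.mul x z + A.mul y z
      rw [map_add, LinearMap.add_apply]
    zero_mul := fun x => by
      change A.mul 0 x = 0
      rw [map_zero, LinearMap.zero_apply]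
    mul_zero := fun x => map_zero (A.mul x) }

scoped instance instAlgebra : Algebra ℚ A.carrier :=
  Algebra.ofModule (fun r x y => by
      change A.mul (r • x) y = r • A.mul x y
      rw [map_smul, LinearMap.smul_apply])
    (fun r x y => map_smul (A.mul x) r y)

theorem mul_eq_mul (x y : A.carrier) : A.mul x y = x * y := rfl

scoped instance instGradedMonoid : SetLike.GradedMonoid A.grading where
  one_mem := A.one_mem
  mul_mem := fun _ _ _ _ hx hy => A.mul_mem _ _ _ _ hx hy

theorem parityOf_one : parityOf A.grading (1 : A.carrier) = 1 :=
  (parityOf_of_mem A.grading A.one_mem).trans (one_smul ℚ _)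

theorem parityOf_mul (x y : A.carrier) :
    parityOf A.grading (x * y) = parityOf A.grading x * parityOf A.grading y := by
  suffices (LinearMap.mul ℚ A.carrier).compr₂ (parityOf A.grading)
      = (LinearMap.mul ℚ A.carrier).compl₁₂ (parityOf A.grading) (parityOf A.grading) from
    LinearMap.congr_fun₂ this x y
  refine ext_of_mem_grading A.grading fun i x hx => ext_of_mem_grading A.grading fun j y hy => ?_
  simp [parityOf_of_mem _ hx, parityOf_of_mem _ hy,
    parityOf_of_mem _ (SetLike.mul_mem_graded hx hy), smul_smul, neg_one_zpow_add, mul_comm]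

theorem d_mul (x y : A.carrier) : A.d (x * y) = A.d x * y + parityOf A.grading x * A.d y := by
  suffices A.d ∘ₗ (LinearMap.mul ℚ A.carrier).flip y = (LinearMap.mul ℚ A.carrier).flip y ∘ₗ A.d
      + (LinearMap.mul ℚ A.carrier).flip (A.d y) ∘ₗ parityOf A.grading from
    LinearMap.congr_fun this x
  refine ext_of_mem_grading A.grading fun i x hx => ?_
  simpa [parityOf_of_mem _ hx, mul_eq_mul] using A.leibniz i x y hx

theorem d_one : A.d (1 : A.carrier) = 0 := by
  simpa [parityOf_one] using A.d_mul 1 1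

end DGAlgebra

section UnitOfAdjunction

open scoped DGAlgebra

/-! ### Cofree dg algebras -/

namespace CofreeDGAlgebra

open DirectSum

variable (R : Type) [Ring R] [Algebra ℚ R]

/-- The vector space underlying the cofree dg algebra on an algebra `R`, i.e. the value at `R` of
the right adjoint of the functor forgetting grading and differential. An element `(x, y)` in degree
`n` stands for a homogeneous element with value `x` whose differential has value `y`. -/
abbrev Carrier : Type := ⨁ _ : ℤ, R × R

variable {R}

/-- The homogeneous element of degree `n` with value `x.1` whose differential has value `x.2`. -/
abbrev Carrier.of (n : ℤ) : R × R →ₗ[ℚ] Carrier R := lof ℚ ℤ (fun _ => R × R) n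

/-- The product of a degree `i` element with another homogeneous element; the second component is
dictated by the Leibniz rule. -/
def pairMul (i : ℤ) : R × R →ₗ[ℚ] R × R →ₗ[ℚ] R × R :=
  LinearMap.mk₂ ℚ (fun x y => (x.1 * y.1, x.2 * y.1 + (-1 : ℚ) ^ i • (x.1 * y.2)))
    (fun x x' y => by
      ext <;> simp only [Prod.fst_add, Prod.snd_add, add_mul, smul_add, Prod.mk_add_mk]
      abel)
    (fun c x y => by ext <;> simp [smul_comm c])
    (fun x y y' => by
      ext <;> simp only [Prod.fst_add, Prod.snd_add, mul_add, smul_add, Prod.mk_add_mk]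
      abel)
    (fun c x y => by ext <;> simp [smul_comm c])

/-- The multiplication of the cofree dg algebra. -/
def mul : Carrier R →ₗ[ℚ] Carrier R →ₗ[ℚ] Carrier R :=
  toModule ℚ ℤ _ fun i =>
    (toModule ℚ ℤ _ fun j => ((pairMul i).compr₂ (Carrier.of (i + j))).flip).flip

theorem mul_of_of (i j : ℤ) (x y : R × R) :
    mul (Carrier.of i x) (Carrier.of j y)
      = Carrier.of (i + j) (x.1 * y.1, x.2 * y.1 + (-1 : ℚ) ^ i • (x.1 * y.2)) := by
  simp [mul, pairMul]

theorem mul_assoc (x y z : Carrier R) : mul (mul x y) z = mul x (mul y z) := by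
  induction x using DirectSum.induction_on with
  | zero => simp
  | add x x' hx hx' => simp [hx, hx']
  | of i x =>
  induction y using DirectSum.induction_on with
  | zero => simp
  | add y y' hy hy' => simp [hy, hy']
  | of j y =>
  induction z using DirectSum.induction_on with
  | zero => simp
  | add z z' hz hz' => simp [hz, hz']
  | of k z =>
  simp only [← lof_eq_of ℚ, mul_of_of, add_mul, mul_add, smul_add, smul_mul_assoc, mul_smul_comm,
    smul_smul, neg_one_zpow_add, _root_.mul_assoc, add_assoc]

/-- The differential of the cofree dg algebra. -/
def diff : Carrier R →ₗ[ℚ] Carrier R :=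
  toModule ℚ ℤ _ fun n => Carrier.of (n - 1) ∘ₗ LinearMap.inl ℚ R R ∘ₗ LinearMap.snd ℚ R R

theorem diff_of (n : ℤ) (x : R × R) : diff (Carrier.of n x) = Carrier.of (n - 1) (x.2, 0) := by
  simp [diff]

/-- The value of an element of the cofree dg algebra. -/
def value : Carrier R →ₗ[ℚ] R := toModule ℚ ℤ R fun _ => LinearMap.fst ℚ R R

theorem value_of (n : ℤ) (x : R × R) : value (Carrier.of n x) = x.1 := by
  simp [value]

theorem value_mul (x y : Carrier R) : value (mul x y) = value x * value y := by
  suffices mul.compr₂ value = (LinearMap.mul ℚ R).compl₁₂ value value from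
    LinearMap.congr_fun₂ this x y
  refine linearMap_ext _ fun i => LinearMap.ext fun x => ?_
  refine linearMap_ext _ fun j => LinearMap.ext fun y => ?_
  simp [mul_of_of, value_of]

variable (R) in
/-- The grading of the cofree dg algebra. -/
abbrev grading (n : ℤ) : Submodule ℚ (Carrier R) := LinearMap.range (Carrier.of n)

instance : Decomposition (grading R) :=
  Decomposition.ofLinearMap (grading R) (lmap fun n => (Carrier.of n).rangeRestrict)
    (linearMap_ext _ fun n => LinearMap.ext fun x => by simp)
    (by
      refine linearMap_ext _ fun n => LinearMap.ext ?_
      rintro ⟨_, x, rfl⟩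
      simp only [LinearMap.comp_apply, coeLinearMap_lof, lmap_lof, LinearMap.id_apply]
      rfl)

end CofreeDGAlgebra

open CofreeDGAlgebra in
/-- The cofree dg algebra on an algebra `R`. -/
def cofreeDGAlgebra (R : Type) [Ring R] [Algebra ℚ R] : DGAlgebra where
  carrier := Carrier R
  grading := grading R
  d := diff
  d_mem := by
    rintro n _ ⟨x, rfl⟩
    exact ⟨_, (diff_of n x).symm⟩
  d_sq := DirectSum.linearMap_ext _ fun n => LinearMap.ext fun x => by
    simp only [LinearMap.comp_apply, diff_of, Prod.mk_zero_zero, map_zero, LinearMap.zero_apply]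
  mul := mul
  one := Carrier.of 0 (1, 0)
  one_mem := ⟨_, rfl⟩
  mul_mem := by
    rintro i j _ _ ⟨x, rfl⟩ ⟨y, rfl⟩
    exact ⟨_, (mul_of_of i j x y).symm⟩
  mul_assoc' := CofreeDGAlgebra.mul_assoc
  one_mul' := by
    suffices mul (Carrier.of 0 (1, 0)) = (LinearMap.id : Carrier R →ₗ[ℚ] Carrier R) from
      LinearMap.congr_fun this
    exact DirectSum.linearMap_ext _ fun n => LinearMap.ext fun x => by simp [mul_of_of]
  mul_one' := by
    suffices mul.flip (Carrier.of 0 (1, 0)) = (LinearMap.id : Carrier R →ₗ[ℚ] Carrier R) from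
      LinearMap.congr_fun this
    exact DirectSum.linearMap_ext _ fun n => LinearMap.ext fun x => by simp [mul_of_of]
  leibniz := by
    rintro i _ y ⟨x, rfl⟩
    induction y using DirectSum.induction_on with
    | zero => simp
    | add y y' hy hy' => simp only [map_add, hy, hy', smul_add]; abel
    | of j y =>
      simp only [← DirectSum.lof_eq_of ℚ, mul_of_of, diff_of, neg_one_zpow_sub_one]
      rw [← map_smul, show i - 1 + j = i + j - 1 by ring, show i + (j - 1) = i + j - 1 by ring,
        ← map_add]
      simp

namespace CofreeDGAlgebra

variable {R : Type} [Ring R] [Algebra ℚ R]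

/-- `Carrier.of` with values in the bundled dg algebra. -/
def of (n : ℤ) : R × R →ₗ[ℚ] (cofreeDGAlgebra R).carrier := Carrier.of n

theorem of_mem (n : ℤ) (x : R × R) : of n x ∈ (cofreeDGAlgebra R).grading n := ⟨x, rfl⟩

theorem one_eq : (1 : (cofreeDGAlgebra R).carrier) = of 0 (1, 0) := rfl

theorem d_of (n : ℤ) (x : R × R) : (cofreeDGAlgebra R).d (of n x) = of (n - 1) (x.2, 0) :=
  diff_of n x

theorem of_mul_of (i j : ℤ) (x y : R × R) :
    of i x * of j y = of (i + j) (x.1 * y.1, x.2 * y.1 + (-1 : ℚ) ^ i • (x.1 * y.2)) :=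
  mul_of_of i j x y

/-- The algebra map to `R` that is cofree among algebra maps from dg algebras. -/
def eval : (cofreeDGAlgebra R).carrier →ₐ[ℚ] R :=
  AlgHom.ofLinearMap value (value_of 0 (1, 0)) value_mul

theorem eval_of (n : ℤ) (x : R × R) : eval (of n x) = x.1 := value_of n x

section GradedMap

variable {V : Type} [AddCommGroup V] [Module ℚ V]
  (g : ℤ → Submodule ℚ V) [DirectSum.Decomposition g]

/-- The map of degree `k` into the cofree dg algebra given by `u` in each degree. -/
def gradedMap (k : ℤ) (u : V →ₗ[ℚ] R × R) : V →ₗ[ℚ] (cofreeDGAlgebra R).carrier :=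
  ofComponents g fun n => of (n + k) ∘ₗ u ∘ₗ (g n).subtype

theorem gradedMap_of_mem (k : ℤ) (u : V →ₗ[ℚ] R × R) {n : ℤ} {x : V} (hx : x ∈ g n) :
    gradedMap g k u x = of (n + k) (u x) :=
  ofComponents_of_mem g _ hx

theorem gradedMap_mem (k : ℤ) (u : V →ₗ[ℚ] R × R) {n : ℤ} {x : V} (hx : x ∈ g n) :
    gradedMap g k u x ∈ (cofreeDGAlgebra R).grading (n + k) :=
  gradedMap_of_mem g k u hx ▸ of_mem _ _

theorem eval_comp_gradedMap (k : ℤ) (u : V →ₗ[ℚ] R × R) :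
    eval.toLinearMap ∘ₗ gradedMap g k u = LinearMap.fst ℚ R R ∘ₗ u := by
  refine ext_of_mem_grading g fun n x hx => ?_
  simp [gradedMap_of_mem g k u hx, eval_of]

end GradedMap

section Jet

variable {A : DGAlgebra} (φ : A.carrier →ₐ[ℚ] R)

/-- The map into the cofree dg algebra that records the values of `φ` on an element and on its
differential. -/
def jet : A.carrier →ₗ[ℚ] (cofreeDGAlgebra R).carrier :=
  gradedMap A.grading 0 (φ.toLinearMap.prod (φ.toLinearMap ∘ₗ A.d))

theorem jet_of_mem {n : ℤ} {a : A.carrier} (ha : a ∈ A.grading n) :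
    jet φ a = of n (φ a, φ (A.d a)) := by
  simp [jet, gradedMap_of_mem A.grading 0 _ ha]

theorem eval_jet (a : A.carrier) : eval (jet φ a) = φ a :=
  LinearMap.congr_fun
    (eval_comp_gradedMap A.grading 0 (φ.toLinearMap.prod (φ.toLinearMap ∘ₗ A.d))) a

theorem jet_comp_d : jet φ ∘ₗ A.d = (cofreeDGAlgebra R).d ∘ₗ jet φ := by
  refine ext_of_mem_grading A.grading fun n a ha => ?_
  simp [jet_of_mem _ ha, jet_of_mem _ (A.d_mem n a ha), d_of]

theorem jet_one : jet φ 1 = 1 := by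
  simp [jet_of_mem φ (SetLike.one_mem_graded A.grading), one_eq, A.d_one]

theorem jet_mul (a b : A.carrier) : jet φ (a * b) = jet φ a * jet φ b := by
  suffices (LinearMap.mul ℚ A.carrier).compr₂ (jet φ)
      = (LinearMap.mul ℚ (cofreeDGAlgebra R).carrier).compl₁₂ (jet φ) (jet φ) from
    LinearMap.congr_fun₂ this a b
  refine ext_of_mem_grading A.grading fun i a ha => ext_of_mem_grading A.grading fun j b hb => ?_
  simp [jet_of_mem _ ha, jet_of_mem _ hb, jet_of_mem _ (SetLike.mul_mem_graded ha hb), of_mul_of,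
    A.d_mul, parityOf_of_mem _ ha]

/-- The dg algebra map into the cofree dg algebra that corresponds to an algebra map `φ`. -/
def jetHom : DGAlgebraHom A (cofreeDGAlgebra R) where
  toLinearMap := jet φ
  mem n _ ha := jet_of_mem φ ha ▸ of_mem n _
  chain := jet_comp_d φ
  map_one := jet_one φ
  map_mul := jet_mul φ

end Jet

end CofreeDGAlgebra

/-! ### Twisting chains into cofree dg algebras -/

namespace DGCoalgebra

open WithConv

section Convolution

variable (C : DGCoalgebra)

instance instCoalgebra : Coalgebra ℚ C.carrier where
  comul := C.comul
  counit := C.counit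
  coassoc := C.coassoc
  rTensor_counit_comp_comul := LinearMap.ext fun c =>
    (TensorProduct.lid ℚ C.carrier).injective
      ((LinearMap.congr_fun C.counit_comul_left c).trans (one_smul ℚ c).symm)
  lTensor_counit_comp_comul := LinearMap.ext fun c =>
    (TensorProduct.rid ℚ C.carrier).injective
      ((LinearMap.congr_fun C.counit_comul_right c).trans (one_smul ℚ c).symm)

theorem coalgebra_comul (c : C.carrier) : Coalgebra.comul (R := ℚ) c = C.comul c := rfl

theorem comul_parityOf (c : C.carrier) :
    C.comul (parityOf C.grading c)
      = TensorProduct.map (parityOf C.grading) (parityOf C.grading) (C.comul c) := by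
  suffices C.comul ∘ₗ parityOf C.grading
      = TensorProduct.map (parityOf C.grading) (parityOf C.grading) ∘ₗ C.comul from
    LinearMap.congr_fun this c
  refine ext_of_mem_grading C.grading fun n x hx => ?_
  have key : tensorGrading C.grading C.grading n ≤ LinearMap.eqLocus
      ((-1 : ℚ) ^ n • LinearMap.id)
      (TensorProduct.map (parityOf C.grading) (parityOf C.grading)) := by
    refine tensorGrading_le_iff.mpr fun i j hij x hx y hy => ?_
    simp only [LinearMap.mem_eqLocus, LinearMap.smul_apply, LinearMap.id_apply,
      TensorProduct.map_tmul, parityOf_of_mem _ hx, parityOf_of_mem _ hy,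
      TensorProduct.smul_tmul_smul, ← hij, neg_one_zpow_add]
  simpa [parityOf_of_mem _ hx] using key (C.comul_mem n x hx)

theorem comul_d (c : C.carrier) :
    C.comul (C.d c) = TensorProduct.map C.d LinearMap.id (C.comul c)
      + TensorProduct.map (parityOf C.grading) C.d (C.comul c) :=
  LinearMap.congr_fun C.comul_chain c

variable {R : Type} [Ring R] [Algebra ℚ R]

/-- Precomposition with the differential, the differential of the convolution algebra
`Hom(C, R)` up to sign. -/
def convD : WithConv (C.carrier →ₗ[ℚ] R) →ₗ[ℚ] WithConv (C.carrier →ₗ[ℚ] R) :=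
  (WithConv.linearEquiv ℚ _).symm.toLinearMap ∘ₗ LinearMap.lcomp ℚ R C.d ∘ₗ
    (WithConv.linearEquiv ℚ _).toLinearMap

/-- Precomposition with the parity operator on the convolution algebra `Hom(C, R)`. -/
def convParity : WithConv (C.carrier →ₗ[ℚ] R) →ₗ[ℚ] WithConv (C.carrier →ₗ[ℚ] R) :=
  (WithConv.linearEquiv ℚ _).symm.toLinearMap ∘ₗ LinearMap.lcomp ℚ R (parityOf C.grading) ∘ₗ
    (WithConv.linearEquiv ℚ _).toLinearMap

theorem convD_apply (f : WithConv (C.carrier →ₗ[ℚ] R)) (c : C.carrier) :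
    C.convD f c = f (C.d c) := rfl

theorem convParity_apply (f : WithConv (C.carrier →ₗ[ℚ] R)) (c : C.carrier) :
    C.convParity f c = f (parityOf C.grading c) := rfl

variable {C}
variable (f g : WithConv (C.carrier →ₗ[ℚ] R))

theorem convParity_convParity : C.convParity (C.convParity f) = f := by
  ext c
  simp [convParity_apply]

theorem convD_convD : C.convD (C.convD f) = 0 := by
  ext c
  simp [convD_apply]

theorem convParity_convD : C.convParity (C.convD f) = -C.convD (C.convParity f) := by
  ext c
  simp [convD_apply, convParity_apply, C.d_parityOf]

theorem convParity_mul : C.convParity (f * g) = C.convParity f * C.convParity g := by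
  ext c
  simp only [convParity_apply, LinearMap.convMul_apply, coalgebra_comul, comul_parityOf,
    TensorProduct.map_map]
  rfl

theorem convD_mul : C.convD (f * g) = C.convD f * g + C.convParity f * C.convD g := by
  ext c
  simp only [convD_apply, LinearMap.convMul_apply, coalgebra_comul, comul_d, map_add,
    TensorProduct.map_map, WithConv.ofConv_add, LinearMap.add_apply]
  rfl

end Convolution

section TwistingChain

open CofreeDGAlgebra

variable {C : DGCoalgebra} {R S : Type} [Ring R] [Algebra ℚ R] [Ring S] [Algebra ℚ S]
  (p : WithConv (C.carrier →ₗ[ℚ] R))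

/-- The value that the twisting equation prescribes for the differential of a twisting chain `p`:
`c ↦ -p(dc) - (-1)^{|c₍₀₎|} p(c₍₀₎) p(c₍₁₎)`. -/
def twistDeriv : WithConv (C.carrier →ₗ[ℚ] R) :=
  -(C.convD p + C.convParity p * p)

theorem twistDeriv_apply (c : C.carrier) :
    twistDeriv p c = -(p (C.d c) + LinearMap.mul' ℚ R
      (TensorProduct.map (p.ofConv ∘ₗ parityOf C.grading) p.ofConv (C.comul c))) := rfl

theorem twistDeriv_bianchi :
    C.convD (twistDeriv p) + (C.convParity (twistDeriv p) * p - p * twistDeriv p) = 0 := by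
  simp only [twistDeriv, map_neg, map_add, convD_mul, convParity_mul, convD_convD,
    convParity_convD, convParity_convParity]
  noncomm_ring

theorem algHom_twistDeriv (φ : R →ₐ[ℚ] S) (c : C.carrier) :
    φ (twistDeriv p c) = twistDeriv (toConv (φ.toLinearMap ∘ₗ p.ofConv)) c := by
  have := LinearMap.congr_fun (LinearMap.algHom_comp_convMul_distrib φ (C.convParity p) p) c
  simp only [twistDeriv, WithConv.ofConv_neg, WithConv.ofConv_add, LinearMap.neg_apply,
    LinearMap.add_apply, map_neg, map_add]
  exact congrArg Neg.neg (congrArg₂ _ rfl this)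

theorem convParity_gradedMap_mul (p q : WithConv (C.carrier →ₗ[ℚ] R)) {n : ℤ} {x : C.carrier}
    (hx : x ∈ C.grading n) :
    letI f := toConv (gradedMap C.grading (-1) (p.ofConv.prod q.ofConv))
    (C.convParity f * f) x
      = of (n - 1 - 1) ((C.convParity p * p) x, (C.convParity q * p - p * q) x) := by
  let f := gradedMap C.grading (-1) (p.ofConv.prod q.ofConv)
  let m (u v : C.carrier →ₗ[ℚ] R) := LinearMap.mul' ℚ R ∘ₗ TensorProduct.map u v
  have key : tensorGrading C.grading C.grading n ≤ LinearMap.eqLocus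
      (LinearMap.mul' ℚ _ ∘ₗ TensorProduct.map (f ∘ₗ parityOf C.grading) f)
      (of (n - 1 - 1) ∘ₗ (m (p.ofConv ∘ₗ parityOf C.grading) p.ofConv).prod
        (m (q.ofConv ∘ₗ parityOf C.grading) p.ofConv - m p.ofConv q.ofConv)) := by
    refine tensorGrading_le_iff.mpr fun i j hij x hx y hy => ?_
    have hdeg : i + -1 + (j + -1) = n - 1 - 1 := by omega
    have hsign : (-1 : ℚ) ^ i * (-1) ^ i = 1 := by rw [← mul_zpow]; norm_num
    simp only [f, m, LinearMap.mem_eqLocus, LinearMap.comp_apply, TensorProduct.map_tmul,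
      LinearMap.mul'_apply, LinearMap.prod_apply, Function.prod_apply, LinearMap.sub_apply,
      parityOf_of_mem _ hx, gradedMap_of_mem _ _ _ hx, gradedMap_of_mem _ _ _ hy, map_smul,
      smul_mul_assoc, of_mul_of, hdeg]
    simp [← map_smul, smul_smul, smul_sub, ← sub_eq_add_neg, neg_one_zpow_sub_one, hsign]
  exact key (C.comul_mem n x hx)

/-- The twisting chain into the cofree dg algebra that is determined by an arbitrary linear map. -/
def cofreeTwistingChain : TwistingChain C (cofreeDGAlgebra R) where
  toFun := gradedMap C.grading (-1) (p.ofConv.prod (twistDeriv p).ofConv)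
  mem n x hx := gradedMap_mem C.grading (-1) _ hx
  twist := by
    refine ext_of_mem_grading C.grading fun n x hx => ?_
    have h := convParity_gradedMap_mul p (twistDeriv p) hx
    have hB : twistDeriv p (C.d x) + (C.convParity (twistDeriv p) * p - p * twistDeriv p) x = 0 :=
      LinearMap.congr_fun (congrArg ofConv (twistDeriv_bianchi p)) x
    calc (cofreeDGAlgebra R).d (gradedMap C.grading (-1) _ x)
            + gradedMap C.grading (-1) _ (C.d x) + _
        = of (n - 1 - 1) (twistDeriv p x, 0) + of (n - 1 - 1) (p (C.d x), twistDeriv p (C.d x))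
          + of (n - 1 - 1) ((C.convParity p * p) x,
            (C.convParity (twistDeriv p) * p - p * twistDeriv p) x) := by
          rw [gradedMap_of_mem _ _ _ hx, gradedMap_of_mem _ _ _ (C.d_mem n x hx), d_of]
          exact congrArg _ h
      _ = 0 := by
          rw [← map_add, ← map_add, Prod.mk_add_mk, Prod.mk_add_mk, zero_add, hB]
          simp [twistDeriv, convD_apply, Prod.mk_zero_zero]

theorem cofreeTwistingChain_of_mem {n : ℤ} {x : C.carrier} (hx : x ∈ C.grading n) :
    (cofreeTwistingChain p).toFun x = of (n - 1) (p x, twistDeriv p x) :=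
  gradedMap_of_mem C.grading (-1) _ hx

end TwistingChain

end DGCoalgebra

/-! ### Derivations on the cobar construction -/

namespace TwistingChain

variable {C : DGCoalgebra} {A : DGAlgebra} (τ : TwistingChain C A)

theorem d_toFun (c : C.carrier) :
    A.d (τ.toFun c) = DGCoalgebra.twistDeriv (.toConv τ.toFun) c := by
  rw [DGCoalgebra.twistDeriv_apply, eq_neg_iff_add_eq_zero, ← add_assoc]
  exact LinearMap.congr_fun τ.twist c

theorem parityOf_toFun (c : C.carrier) :
    parityOf A.grading (τ.toFun c) = -τ.toFun (parityOf C.grading c) := by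
  suffices parityOf A.grading ∘ₗ τ.toFun = -(τ.toFun ∘ₗ parityOf C.grading) from
    LinearMap.congr_fun this c
  refine ext_of_mem_grading C.grading fun n x hx => ?_
  simp [parityOf_of_mem _ hx, parityOf_of_mem _ (τ.mem n x hx), neg_one_zpow_sub_one]

theorem jet_toFun {R : Type} [Ring R] [Algebra ℚ R] (φ : A.carrier →ₐ[ℚ] R) :
    CofreeDGAlgebra.jet φ ∘ₗ τ.toFun
      = (DGCoalgebra.cofreeTwistingChain (.toConv (φ.toLinearMap ∘ₗ τ.toFun))).toFun := by
  refine ext_of_mem_grading C.grading fun n x hx => ?_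
  rw [LinearMap.comp_apply, CofreeDGAlgebra.jet_of_mem φ (τ.mem n x hx), τ.d_toFun,
    DGCoalgebra.algHom_twistDeriv, DGCoalgebra.cofreeTwistingChain_of_mem _ hx]
  rfl

end TwistingChain

theorem CoaugDGCoalgebra.d_one (C : CoaugDGCoalgebra) : C.d C.one = 0 := by
  have := C.d_mem 0 C.one C.one_mem
  rwa [C.nonneg _ (by norm_num), Submodule.mem_bot] at this

namespace CobarData

open DGCoalgebra WithConv

variable {C : CoaugDGCoalgebra} (Ω : CobarData C)

section

variable {R : Type} [Ring R] [Algebra ℚ R]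

theorem cofreeTwistingChain_one (p : C.carrier →ₗ[ℚ] R) (hp : p C.one = 0) :
    (cofreeTwistingChain (toConv p)).toFun C.one = 0 := by
  simp [cofreeTwistingChain_of_mem _ C.one_mem, twistDeriv_apply, hp, C.d_one, C.comul_one,
    Prod.mk_zero_zero]

theorem existsUnique_algHom (p : C.carrier →ₗ[ℚ] R) (hp : p C.one = 0) :
    ∃! φ : Ω.alg.carrier →ₐ[ℚ] R, φ.toLinearMap ∘ₗ Ω.t.toFun = p := by
  obtain ⟨F, hF, hF_unique⟩ := Ω.univ _ _ (cofreeTwistingChain_one p hp)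
  refine ⟨CofreeDGAlgebra.eval.comp (AlgHom.ofLinearMap F.toLinearMap F.map_one F.map_mul), ?_,
    fun φ hφ => ?_⟩
  · exact (congrArg (CofreeDGAlgebra.eval.toLinearMap ∘ₗ ·) hF).trans
      (CofreeDGAlgebra.eval_comp_gradedMap C.grading (-1) _)
  · have hjet : CofreeDGAlgebra.jetHom φ = F :=
      hF_unique _ ((Ω.t.jet_toFun φ).trans (by rw [hφ]))
    ext a
    rw [← CofreeDGAlgebra.eval_jet φ a]
    exact congrArg (fun G => CofreeDGAlgebra.eval (G.toLinearMap a)) hjet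

theorem algHom_ext {φ ψ : Ω.alg.carrier →ₐ[ℚ] R}
    (h : ∀ c, φ (Ω.t.toFun c) = ψ (Ω.t.toFun c)) : φ = ψ :=
  (Ω.existsUnique_algHom (ψ.toLinearMap ∘ₗ Ω.t.toFun) (by simp [Ω.t_one])).unique
    (LinearMap.ext h) rfl

end

theorem adjoin_range_t : Algebra.adjoin ℚ (Set.range Ω.t.toFun) = ⊤ := by
  let S := Algebra.adjoin ℚ (Set.range Ω.t.toFun)
  let t' : C.carrier →ₗ[ℚ] S := Ω.t.toFun.codRestrict (Subalgebra.toSubmodule S)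
    fun c => Algebra.subset_adjoin ⟨c, rfl⟩
  obtain ⟨φ, hφ, -⟩ := Ω.existsUnique_algHom t' (Subtype.ext Ω.t_one)
  have hid : S.val.comp φ = AlgHom.id ℚ Ω.alg.carrier :=
    Ω.algHom_ext fun c => congrArg S.val (LinearMap.congr_fun hφ c)
  refine Algebra.eq_top_iff.mpr fun a => ?_
  rw [← AlgHom.id_apply (R := ℚ) a, ← hid]
  exact (φ a).2

@[elab_as_elim]
theorem induction_on {motive : Ω.alg.carrier → Prop} (a : Ω.alg.carrier)
    (t : ∀ c, motive (Ω.t.toFun c)) (algebraMap : ∀ r : ℚ, motive (algebraMap ℚ _ r))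
    (add : ∀ a b, motive a → motive b → motive (a + b))
    (mul : ∀ a b, motive a → motive b → motive (a * b)) : motive a := by
  have ha : a ∈ Algebra.adjoin ℚ (Set.range Ω.t.toFun) := Ω.adjoin_range_t ▸ Algebra.mem_top
  induction ha using Algebra.adjoin_induction with
  | mem _ h => obtain ⟨c, rfl⟩ := h; exact t c
  | algebraMap r => exact algebraMap r
  | add a b _ _ ha hb => exact add a b ha hb
  | mul a b _ _ ha hb => exact mul a b ha hb

section TwistedDerivation

variable {X Y : Type}
  [AddCommGroup X] [Module ℚ X] [Module Ω.alg.carrier X] [IsScalarTower ℚ Ω.alg.carrier X]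
  [AddCommGroup Y] [Module ℚ Y] [Module Ω.alg.carrier Y] [IsScalarTower ℚ Ω.alg.carrier Y]

/-- The generator of the upper triangular representation on `Y × X` whose off-diagonal entry is a
twisted derivation with values `δ` on generators. -/
def triangularGenerator (δ : C.carrier →ₗ[ℚ] X →ₗ[ℚ] Y) : C.carrier →ₗ[ℚ] Module.End ℚ (Y × X) :=
  LinearMap.mk₂ ℚ (fun c z => (parityOf Ω.alg.grading (Ω.t.toFun c) • z.1 + δ c z.2,
      Ω.t.toFun c • z.2))
    (fun c c' z => by
      simp only [map_add, add_smul, LinearMap.add_apply, Prod.mk_add_mk, Prod.mk.injEq, and_true]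
      abel)
    (fun r c z => by simp)
    (fun c z z' => by
      simp only [Prod.fst_add, Prod.snd_add, smul_add, map_add, Prod.mk_add_mk, Prod.mk.injEq,
        and_true]
      abel)
    (fun r c z => by simp [smul_comm r])

theorem exists_twistedDerivation (δ : C.carrier →ₗ[ℚ] X →ₗ[ℚ] Y) (hδ : δ C.one = 0) :
    ∃ H : Ω.alg.carrier →ₗ[ℚ] X →ₗ[ℚ] Y, (∀ c, H (Ω.t.toFun c) = δ c) ∧
      ∀ a b x, H (a * b) x = parityOf Ω.alg.grading a • H b x + H a (b • x) := by
  obtain ⟨φ, hφ, -⟩ := Ω.existsUnique_algHom (Ω.triangularGenerator δ)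
    (LinearMap.ext fun z => by simp [triangularGenerator, Ω.t_one, hδ])
  have hφt (c : C.carrier) (z : Y × X) : φ (Ω.t.toFun c) z
      = (parityOf Ω.alg.grading (Ω.t.toFun c) • z.1 + δ c z.2, Ω.t.toFun c • z.2) :=
    LinearMap.congr_fun (LinearMap.congr_fun hφ c) z
  let H : Ω.alg.carrier →ₗ[ℚ] X →ₗ[ℚ] Y :=
    φ.toLinearMap.compr₂ (LinearMap.fst ℚ Y X) |>.compl₂ (LinearMap.inr ℚ Y X)
  have hφH (a : Ω.alg.carrier) (z : Y × X) :
      φ a z = (parityOf Ω.alg.grading a • z.1 + H a z.2, a • z.2) := by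
    induction a using Ω.induction_on generalizing z with
    | t c => simp [H, hφt]
    | algebraMap r =>
      simp [H, Algebra.algebraMap_eq_smul_one, Ω.alg.parityOf_one, Prod.smul_def]
    | add a b ha hb => simp [ha z, hb z, add_smul, add_add_add_comm]
    | mul a b ha hb =>
      have hHab : H (a * b) z.2 = parityOf Ω.alg.grading a • H b z.2 + H a (b • z.2) := by
        change (φ (a * b) (0, z.2)).1 = _
        simp [ha, hb]
      simp [ha, hb, hHab, Ω.alg.parityOf_mul, mul_smul, add_assoc]
  refine ⟨H, fun c => LinearMap.ext fun x => by simp [H, hφt], fun a b x => ?_⟩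
  change (φ (a * b) (0, x)).1 = _
  simp [hφH]

end TwistedDerivation

end CobarData

/-! ### Twisted extensions of twisted coextensions -/

theorem DGCoalgebra.counit_parityOf (C : DGCoalgebra) (c : C.carrier) :
    C.counit (parityOf C.grading c) = C.counit c := by
  suffices C.counit ∘ₗ parityOf C.grading = C.counit from LinearMap.congr_fun this c
  refine ext_of_mem_grading C.grading fun n x hx => ?_
  rcases eq_or_ne n 0 with rfl | hn
  · simp [parityOf_of_mem _ hx]
  · simp [parityOf_of_mem _ hx, C.counit_zero n hn x hx]

theorem DGCoalgebra.sum_counit_left (C : DGCoalgebra) {ι : Type*} {c : C.carrier}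
    (𝓡 : Coalgebra.Repr ℚ c ι) : ∑ i ∈ 𝓡.index, C.counit (𝓡.left i) • 𝓡.right i = c :=
  Coalgebra.sum_counit_smul 𝓡

theorem DGCoalgebra.sum_counit_right (C : DGCoalgebra) {ι : Type*} {c : C.carrier}
    (𝓡 : Coalgebra.Repr ℚ c ι) : ∑ i ∈ 𝓡.index, C.counit (𝓡.right i) • 𝓡.left i = c := by
  have := congrArg (TensorProduct.rid ℚ C.carrier) (Coalgebra.sum_tmul_counit_eq 𝓡)
  simp only [map_sum, TensorProduct.rid_tmul, one_smul] at this
  exact this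

/-- The Leibniz rule for a differential on a module over the dg algebra `A`. -/
def DGAlgebra.IsLeibniz (A : DGAlgebra) {M : Type} [AddCommGroup M] [Module ℚ M]
    [Module A.carrier M] (dM : M →ₗ[ℚ] M) : Prop :=
  ∀ (a : A.carrier) (m : M), dM (a • m) = A.d a • m + parityOf A.grading a • dM m

section Extension

variable {C : DGCoalgebra} {A : DGAlgebra} (τ : TwistingChain C A)
  {N : Type} [AddCommGroup N] [Module ℚ N] (dN : N →ₗ[ℚ] N) (ρ : N →ₗ[ℚ] C.carrier ⊗[ℚ] N)

theorem extAction_tmul (a : A.carrier) (w : A.carrier ⊗[ℚ] N) :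
    extAction A N (a ⊗ₜ w) = a • w := by
  induction w with
  | zero => simp
  | add w w' hw hw' => rw [TensorProduct.tmul_add, map_add, hw, hw', smul_add]
  | tmul b n => rfl

/-- The twisting term `c ⊗ n ↦ a τ(c) ⊗ n` in the differential of a twisted extension. -/
def twistTerm (a : A.carrier) : C.carrier ⊗[ℚ] N →ₗ[ℚ] A.carrier ⊗[ℚ] N :=
  LinearMap.rTensor N (LinearMap.mulLeft ℚ a ∘ₗ τ.toFun)

theorem twistTerm_tmul (a : A.carrier) (c : C.carrier) (n : N) :
    twistTerm τ a (c ⊗ₜ n) = (a * τ.toFun c) ⊗ₜ[ℚ] n := rfl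

theorem twistTerm_mul (a b : A.carrier) (z : C.carrier ⊗[ℚ] N) :
    twistTerm τ (a * b) z = a • twistTerm τ b z := by
  induction z with
  | zero => simp
  | add z z' hz hz' => simp [hz, hz']
  | tmul c n => simp [twistTerm_tmul, TensorProduct.smul_tmul', mul_assoc]

theorem extDiff_tmul (a : A.carrier) (n : N) :
    extDiff C A τ N dN ρ (a ⊗ₜ n) = A.d a ⊗ₜ n + parityOf A.grading a ⊗ₜ dN n
      - twistTerm τ (parityOf A.grading a) (ρ n) := by
  refine congrArg (A.d a ⊗ₜ[ℚ] n + parityOf A.grading a ⊗ₜ[ℚ] dN n - ·) ?_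
  simp only [LinearMap.comp_apply, LinearEquiv.coe_coe, TensorProduct.map_tmul, LinearMap.id_apply]
  induction ρ n with
  | zero => simp
  | add z z' hz hz' => simp only [TensorProduct.tmul_add, map_add, hz, hz']
  | tmul c n => rfl

theorem isLeibniz_extDiff : A.IsLeibniz (extDiff C A τ N dN ρ) := by
  intro a w
  induction w with
  | zero => simp
  | add w w' hw hw' => simp only [smul_add, map_add, hw, hw']; abel
  | tmul b n =>
    simp only [TensorProduct.smul_tmul', smul_eq_mul, extDiff_tmul, A.d_mul, A.parityOf_mul,
      twistTerm_mul, TensorProduct.add_tmul, smul_add, smul_sub]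
    abel

theorem extDiff_comp_map {N' : Type} [AddCommGroup N'] [Module ℚ N'] {dN : N →ₗ[ℚ] N}
    {ρ : N →ₗ[ℚ] C.carrier ⊗[ℚ] N} {dN' : N' →ₗ[ℚ] N'} {ρ' : N' →ₗ[ℚ] C.carrier ⊗[ℚ] N'}
    {f : N →ₗ[ℚ] N'} (hd : ∀ n, dN' (f n) = f (dN n))
    (hρ : ∀ n, ρ' (f n) = TensorProduct.map LinearMap.id f (ρ n)) :
    extDiff C A τ N' dN' ρ' ∘ₗ TensorProduct.map LinearMap.id f
      = TensorProduct.map LinearMap.id f ∘ₗ extDiff C A τ N dN ρ := by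
  have htwist (a : A.carrier) (z : C.carrier ⊗[ℚ] N) :
      twistTerm τ a (TensorProduct.map LinearMap.id f z)
        = TensorProduct.map LinearMap.id f (twistTerm τ a z) := by
    induction z with
    | zero => simp
    | add z z' hz hz' => simp only [map_add, hz, hz']
    | tmul c n => rfl
  ext a n
  simp [extDiff_tmul, hd, hρ, htwist]

end Extension

section ContractCounit

variable {C : DGCoalgebra} {A M Y : Type} [AddCommGroup A] [Module ℚ A]
  [AddCommGroup M] [Module ℚ M] [AddCommGroup Y] [Module ℚ Y]

/-- The map `a ⊗ c ⊗ m ↦ ε(c) B(a, m)`. -/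
def contractCounit (C : DGCoalgebra) (B : A →ₗ[ℚ] M →ₗ[ℚ] Y) :
    A ⊗[ℚ] (C.carrier ⊗[ℚ] M) →ₗ[ℚ] Y :=
  TensorProduct.lift B ∘ₗ
    LinearMap.lTensor A ((TensorProduct.lid ℚ M).toLinearMap ∘ₗ LinearMap.rTensor M C.counit)

theorem contractCounit_tmul (B : A →ₗ[ℚ] M →ₗ[ℚ] Y) (a : A) (c : C.carrier)
    (m : M) : contractCounit C B (a ⊗ₜ (c ⊗ₜ m)) = C.counit c • B a m := by
  simp [contractCounit]

end ContractCounit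

section TwoSided

variable {C : DGCoalgebra} {A : DGAlgebra} (τ : TwistingChain C A)
  {M : Type} [AddCommGroup M] [Module ℚ M] [Module A.carrier M] [IsScalarTower ℚ A.carrier M]
  {Y : Type} [AddCommGroup Y] [Module ℚ Y] (dM : M →ₗ[ℚ] M)

variable (A M) in
/-- The action of an algebra on a module as a map out of the tensor product. -/
def tensorAction : A.carrier ⊗[ℚ] M →ₗ[ℚ] M :=
  TensorProduct.lift (Algebra.lsmul ℚ ℚ M).toLinearMap

theorem tensorAction_tmul (a : A.carrier) (m : M) : tensorAction A M (a ⊗ₜ m) = a • m := rfl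

theorem extAction_eq_tensorAction (N : Type) [AddCommGroup N] [Module ℚ N] :
    extAction A N = tensorAction A (A.carrier ⊗[ℚ] N) :=
  TensorProduct.ext' extAction_tmul

/-- The differential of `t^! t_* M = A ⊗_τ (C ⊗^τ M)`. -/
def extCoextDiff : A.carrier ⊗[ℚ] (C.carrier ⊗[ℚ] M) →ₗ[ℚ] A.carrier ⊗[ℚ] (C.carrier ⊗[ℚ] M) :=
  extDiff C A τ (C.carrier ⊗[ℚ] M) (coextDiff C A τ M dM (tensorAction A M)) (coextCoact C M)

theorem coextCoact_tmul {ι : Type*} {c : C.carrier} (𝓡 : Coalgebra.Repr ℚ c ι) (m : M) :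
    coextCoact C M (c ⊗ₜ m) = ∑ i ∈ 𝓡.index, 𝓡.left i ⊗ₜ[ℚ] (𝓡.right i ⊗ₜ[ℚ] m) := by
  have h𝓡 : C.comul c = _ := 𝓡.eq.symm
  simp [coextCoact, h𝓡, TensorProduct.sum_tmul]

theorem coextCoact_lTensor {M' : Type} [AddCommGroup M'] [Module ℚ M'] (f : M →ₗ[ℚ] M')
    (z : C.carrier ⊗[ℚ] M) :
    coextCoact C M' (LinearMap.lTensor C.carrier f z)
      = LinearMap.lTensor C.carrier (LinearMap.lTensor C.carrier f) (coextCoact C M z) := by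
  induction z with
  | zero => simp
  | add z z' hz hz' => simp only [map_add, hz, hz']
  | tmul c m => simp [coextCoact_tmul (Coalgebra.Repr.arbitrary ℚ c)]

theorem coextDiff_tmul {ι : Type*} {c : C.carrier} (𝓡 : Coalgebra.Repr ℚ c ι) (m : M) :
    coextDiff C A τ M dM (tensorAction A M) (c ⊗ₜ m)
      = C.d c ⊗ₜ m + parityOf C.grading c ⊗ₜ dM m
        + ∑ i ∈ 𝓡.index, parityOf C.grading (𝓡.left i) ⊗ₜ (τ.toFun (𝓡.right i) • m) := by
  simp [coextDiff, coextDiffFrom, coextCoact_tmul 𝓡, tensorAction_tmul]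

theorem extCoextDiff_tmul {ι : Type*} (a : A.carrier) {c : C.carrier} (𝓡 : Coalgebra.Repr ℚ c ι)
    (m : M) :
    extCoextDiff τ dM (a ⊗ₜ (c ⊗ₜ m)) = A.d a ⊗ₜ (c ⊗ₜ m)
      + parityOf A.grading a ⊗ₜ (C.d c ⊗ₜ m + parityOf C.grading c ⊗ₜ dM m
        + ∑ i ∈ 𝓡.index, parityOf C.grading (𝓡.left i) ⊗ₜ (τ.toFun (𝓡.right i) • m))
      - ∑ i ∈ 𝓡.index,
        (parityOf A.grading a * τ.toFun (𝓡.left i)) ⊗ₜ[ℚ] (𝓡.right i ⊗ₜ[ℚ] m) := by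
  simp only [extCoextDiff, extDiff_tmul, coextDiff_tmul τ dM 𝓡, coextCoact_tmul 𝓡, map_sum,
    twistTerm_tmul]

theorem contractCounit_extCoextDiff (B : A.carrier →ₗ[ℚ] M →ₗ[ℚ] Y) (a : A.carrier)
    (c : C.carrier) (m : M) :
    contractCounit C B (extCoextDiff τ dM (a ⊗ₜ (c ⊗ₜ m)))
      = C.counit c • (B (A.d a) m + B (parityOf A.grading a) (dM m))
        + B (parityOf A.grading a) (τ.toFun c • m) - B (parityOf A.grading a * τ.toFun c) m := by
  let 𝓡 := Coalgebra.Repr.arbitrary ℚ c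
  have hd : C.counit (C.d c) = 0 := LinearMap.congr_fun C.counit_chain c
  have hleft : ∑ i ∈ 𝓡.index, C.counit (𝓡.left i) • B (parityOf A.grading a)
      (τ.toFun (𝓡.right i) • m) = B (parityOf A.grading a) (τ.toFun c • m) := by
    conv_rhs => rw [← C.sum_counit_left 𝓡]
    simp only [map_sum, map_smul, Finset.sum_smul, smul_assoc]
  have hright : ∑ i ∈ 𝓡.index, C.counit (𝓡.right i) • B (parityOf A.grading a * τ.toFun (𝓡.left i))
      m = B (parityOf A.grading a * τ.toFun c) m := by
    conv_rhs => rw [← C.sum_counit_right 𝓡]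
    simp only [map_sum, map_smul, Finset.mul_sum, mul_smul_comm, LinearMap.sum_apply,
      LinearMap.smul_apply]
  simp only [extCoextDiff_tmul τ dM a 𝓡, map_sub, map_add, TensorProduct.tmul_add,
    TensorProduct.tmul_sum, map_sum, contractCounit_tmul, C.counit_parityOf, hd, zero_smul, hleft,
    hright, smul_add, zero_add, add_assoc]

theorem isLeibniz_extCoextDiff : A.IsLeibniz (extCoextDiff τ dM) :=
  isLeibniz_extDiff τ _ _

variable (C A M) in
/-- The counit `a ⊗ c ⊗ m ↦ ε(c) a m` of the adjunction between `t^!` and `t_*`. -/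
def extCoextCounit : A.carrier ⊗[ℚ] (C.carrier ⊗[ℚ] M) →ₗ[ℚ] M :=
  contractCounit C (Algebra.lsmul ℚ ℚ M).toLinearMap

theorem extCoextCounit_tmul (a : A.carrier) (c : C.carrier) (m : M) :
    extCoextCounit C A M (a ⊗ₜ (c ⊗ₜ m)) = C.counit c • a • m :=
  contractCounit_tmul _ a c m

/-- The boundary `∂H = d ∘ H + H ∘ d` of a map `H : A ⊗ M → A ⊗_τ (C ⊗^τ M)` of degree `1`,
with `H` in curried form. -/
def extCoextBoundary (H : A.carrier →ₗ[ℚ] M →ₗ[ℚ] A.carrier ⊗[ℚ] (C.carrier ⊗[ℚ] M)) :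
    A.carrier →ₗ[ℚ] M →ₗ[ℚ] A.carrier ⊗[ℚ] (C.carrier ⊗[ℚ] M) :=
  H.compr₂ (extCoextDiff τ dM) + H ∘ₗ A.d + (H ∘ₗ parityOf A.grading).compl₂ dM

theorem extCoextBoundary_apply
    (H : A.carrier →ₗ[ℚ] M →ₗ[ℚ] A.carrier ⊗[ℚ] (C.carrier ⊗[ℚ] M)) (a : A.carrier) (m : M) :
    extCoextBoundary τ dM H a m
      = extCoextDiff τ dM (H a m) + H (A.d a) m + H (parityOf A.grading a) (dM m) := rfl

theorem extCoextCounit_comp_extCoextDiff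
    (hdM : A.IsLeibniz dM) :
    extCoextCounit C A M ∘ₗ extCoextDiff τ dM = dM ∘ₗ extCoextCounit C A M := by
  ext a c m
  have hcontract := contractCounit_extCoextDiff τ dM (Algebra.lsmul ℚ ℚ M).toLinearMap a c m
  simp only [TensorProduct.AlgebraTensorModule.curry_apply, TensorProduct.curry_apply,
    LinearMap.coe_restrictScalars, LinearMap.comp_apply, extCoextCounit_tmul, map_smul, hdM a m]
  refine hcontract.trans ?_
  simp

end TwoSided

/-! ### The contracting homotopy -/

namespace CobarData

variable {C : CoaugDGCoalgebra} (Ω : CobarData C)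

theorem derivation_ext {X Y : Type}
    [AddCommGroup X] [Module ℚ X] [Module Ω.alg.carrier X] [IsScalarTower ℚ Ω.alg.carrier X]
    [AddCommGroup Y] [Module ℚ Y] [Module Ω.alg.carrier Y] [IsScalarTower ℚ Ω.alg.carrier Y]
    {D E : Ω.alg.carrier →ₗ[ℚ] X →ₗ[ℚ] Y}
    (hD : ∀ a b x, D (a * b) x = a • D b x + D a (b • x))
    (hE : ∀ a b x, E (a * b) x = a • E b x + E a (b • x))
    (h : ∀ c, D (Ω.t.toFun c) = E (Ω.t.toFun c)) : D = E := by
  ext a x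
  induction a using Ω.induction_on generalizing x with
  | t c => rw [h]
  | algebraMap r =>
    have hD1 : D 1 x = 0 := by simpa using hD 1 1 x
    have hE1 : E 1 x = 0 := by simpa using hE 1 1 x
    simp [Algebra.algebraMap_eq_smul_one, hD1, hE1]
  | add a b ha hb => simp [ha, hb]
  | mul a b ha hb => rw [hD, hE, ha, hb]

section Inclusion

variable {M : Type} [AddCommGroup M] [Module ℚ M]

/-- The inclusion `m ↦ 1 ⊗ 1 ⊗ m` of `M` into `t^! t_* M`. -/
def extCoextIncl : M →ₗ[ℚ] Ω.alg.carrier ⊗[ℚ] (C.carrier ⊗[ℚ] M) :=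
  TensorProduct.mk ℚ _ _ 1 ∘ₗ TensorProduct.mk ℚ _ _ C.one

theorem extCoextIncl_apply (m : M) : Ω.extCoextIncl m = 1 ⊗ₜ[ℚ] (C.one ⊗ₜ[ℚ] m) := rfl

/-- The values `m ↦ -1 ⊗ (c - ε(c)) ⊗ m` of the contracting derivation on generators. -/
def homotopyGenerator : C.carrier →ₗ[ℚ] M →ₗ[ℚ] Ω.alg.carrier ⊗[ℚ] (C.carrier ⊗[ℚ] M) :=
  (TensorProduct.mk ℚ C.carrier M).compr₂ (-TensorProduct.mk ℚ _ _ 1) ∘ₗ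
    (LinearMap.id - C.counit.smulRight C.one)

theorem homotopyGenerator_apply (c : C.carrier) (m : M) :
    Ω.homotopyGenerator c m = C.counit c • Ω.extCoextIncl m - 1 ⊗ₜ[ℚ] (c ⊗ₜ[ℚ] m) := by
  simp [homotopyGenerator, extCoextIncl_apply, neg_add_eq_sub]

end Inclusion

section Homotopy

variable {M : Type} [AddCommGroup M] [Module ℚ M] [Module Ω.alg.carrier M]

/-- `H` is a derivation, twisted by the parity, from `ΩC` to maps `M → t^! t_* M`, with the values
on generators that turn `a ⊗ c ⊗ m ↦ ε(c) H(a)(m)` into a contraction of `t^! t_* M` onto `M`. -/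
structure IsContractingDerivation
    (H : Ω.alg.carrier →ₗ[ℚ] M →ₗ[ℚ] Ω.alg.carrier ⊗[ℚ] (C.carrier ⊗[ℚ] M)) : Prop where
  apply_t : ∀ c m, H (Ω.t.toFun c) m = C.counit c • Ω.extCoextIncl m - 1 ⊗ₜ[ℚ] (c ⊗ₜ[ℚ] m)
  apply_mul : ∀ a b m, H (a * b) m = parityOf Ω.alg.grading a • H b m + H a (b • m)

variable [IsScalarTower ℚ Ω.alg.carrier M]

variable (M) in
theorem exists_isContractingDerivation :
    ∃ H : Ω.alg.carrier →ₗ[ℚ] M →ₗ[ℚ] Ω.alg.carrier ⊗[ℚ] (C.carrier ⊗[ℚ] M),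
      Ω.IsContractingDerivation H := by
  obtain ⟨H, hHt, hH⟩ := Ω.exists_twistedDerivation (Ω.homotopyGenerator (M := M))
    (LinearMap.ext fun m => by simp [homotopyGenerator, C.counit_one])
  exact ⟨H, fun c m => by rw [hHt, homotopyGenerator_apply], hH⟩

variable {dM : M →ₗ[ℚ] M}

theorem extCoextDiff_extCoextIncl (m : M) :
    extCoextDiff Ω.t dM (Ω.extCoextIncl m) = Ω.extCoextIncl (dM m) := by
  simp [extCoextDiff, extCoextIncl_apply, extDiff_tmul, Ω.alg.d_one, Ω.alg.parityOf_one,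
    coextDiff, coextDiffFrom, coextCoact, C.d_one, C.comul_one, Ω.t_one,
    parityOf_of_mem _ C.one_mem, twistTerm_tmul]

variable {Ω} {H : Ω.alg.carrier →ₗ[ℚ] M →ₗ[ℚ] Ω.alg.carrier ⊗[ℚ] (C.carrier ⊗[ℚ] M)}

theorem IsContractingDerivation.apply_d_t (hH : Ω.IsContractingDerivation H) {ι : Type*}
    {c : C.carrier} (𝓡 : Coalgebra.Repr ℚ c ι) (m : M) :
    H (Ω.alg.d (Ω.t.toFun c)) m = 1 ⊗ₜ[ℚ] (C.d c ⊗ₜ[ℚ] m)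
      + Ω.t.toFun c • Ω.extCoextIncl m - Ω.extCoextIncl (Ω.t.toFun c • m)
      - ∑ i ∈ 𝓡.index, Ω.t.toFun (𝓡.left i) ⊗ₜ[ℚ] (𝓡.right i ⊗ₜ[ℚ] m)
      + ∑ i ∈ 𝓡.index, 1 ⊗ₜ[ℚ]
          (parityOf C.grading (𝓡.left i) ⊗ₜ[ℚ] (Ω.t.toFun (𝓡.right i) • m)) := by
  have hd : C.counit (C.d c) = 0 := LinearMap.congr_fun C.counit_chain c
  have hcomul : C.comul c = _ := 𝓡.eq.symm
  have hleft : ∑ i ∈ 𝓡.index, C.counit (𝓡.left i) • Ω.extCoextIncl (Ω.t.toFun (𝓡.right i) • m)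
      = Ω.extCoextIncl (Ω.t.toFun c • m) := by
    conv_rhs => rw [← C.sum_counit_left 𝓡]
    simp only [map_sum, map_smul, Finset.sum_smul, smul_assoc]
  have hright : ∑ i ∈ 𝓡.index, C.counit (𝓡.right i) • Ω.t.toFun (𝓡.left i) • Ω.extCoextIncl m
      = Ω.t.toFun c • Ω.extCoextIncl m := by
    conv_rhs => rw [← C.sum_counit_right 𝓡]
    simp only [map_sum, map_smul, Finset.sum_smul, smul_assoc]
  rw [Ω.t.d_toFun, DGCoalgebra.twistDeriv_apply, hcomul]
  simp only [map_neg, map_add, map_sum, TensorProduct.map_tmul, LinearMap.mul'_apply,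
    LinearMap.comp_apply, LinearMap.neg_apply, LinearMap.add_apply,
    LinearMap.sum_apply, hH.apply_mul, hH.apply_t, hd, Ω.t.parityOf_toFun, parityOf_parityOf,
    C.counit_parityOf, neg_smul, smul_sub, smul_comm (Ω.t.toFun _) (C.counit _),
    TensorProduct.smul_tmul', smul_eq_mul, mul_one, zero_smul, Finset.sum_add_distrib,
    Finset.sum_sub_distrib, Finset.sum_neg_distrib, hleft, hright]
  abel

/-- The commutator `a ↦ [a, s]` of the action with the inclusion `s : M → t^! t_* M`. -/
def inclCommutator : Ω.alg.carrier →ₗ[ℚ] M →ₗ[ℚ] Ω.alg.carrier ⊗[ℚ] (C.carrier ⊗[ℚ] M) :=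
  (Algebra.lsmul ℚ ℚ _).toLinearMap.compl₂ Ω.extCoextIncl
    - (Algebra.lsmul ℚ ℚ M).toLinearMap.compr₂ Ω.extCoextIncl

theorem inclCommutator_apply (a : Ω.alg.carrier) (m : M) :
    inclCommutator a m = a • Ω.extCoextIncl m - Ω.extCoextIncl (a • m) := rfl

theorem IsContractingDerivation.boundary_apply_t (hH : Ω.IsContractingDerivation H) (c : C.carrier)
    (m : M) : extCoextBoundary Ω.t dM H (Ω.t.toFun c) m
      = Ω.t.toFun c • Ω.extCoextIncl m - Ω.extCoextIncl (Ω.t.toFun c • m) := by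
  let 𝓡 := Coalgebra.Repr.arbitrary ℚ c
  rw [extCoextBoundary_apply, hH.apply_d_t 𝓡, Ω.t.parityOf_toFun, map_neg, LinearMap.neg_apply,
    hH.apply_t, hH.apply_t, C.counit_parityOf, map_sub, map_smul, extCoextDiff_extCoextIncl,
    extCoextDiff_tmul Ω.t dM 1 𝓡]
  simp only [Ω.alg.d_one, Ω.alg.parityOf_one, TensorProduct.zero_tmul, TensorProduct.tmul_add,
    TensorProduct.tmul_sum, one_mul]
  abel

theorem IsContractingDerivation.boundary_apply_mul (hH : Ω.IsContractingDerivation H)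
    (hdM : Ω.alg.IsLeibniz dM)
    (a b : Ω.alg.carrier) (m : M) : extCoextBoundary Ω.t dM H (a * b) m
      = a • extCoextBoundary Ω.t dM H b m + extCoextBoundary Ω.t dM H a (b • m) := by
  simp only [extCoextBoundary_apply, hH.apply_mul, map_add, isLeibniz_extCoextDiff Ω.t dM _ _,
    hdM b m, Ω.alg.d_mul, Ω.alg.parityOf_mul, Ω.alg.d_parityOf, LinearMap.add_apply,
    parityOf_parityOf, smul_add, neg_smul]
  abel

theorem IsContractingDerivation.boundary_apply (hH : Ω.IsContractingDerivation H)
    (hdM : Ω.alg.IsLeibniz dM)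
    (a : Ω.alg.carrier) (m : M) : extCoextBoundary Ω.t dM H a m
      = a • Ω.extCoextIncl m - Ω.extCoextIncl (a • m) := by
  refine LinearMap.congr_fun₂ (h := Ω.derivation_ext (E := inclCommutator)
    (hH.boundary_apply_mul hdM) (fun a b m => ?_) fun c => LinearMap.ext fun m => ?_) a m
  · simp only [inclCommutator_apply, mul_smul, smul_sub]
    abel
  · rw [hH.boundary_apply_t, inclCommutator_apply]

theorem IsContractingDerivation.homotopy (hH : Ω.IsContractingDerivation H)
    (hdM : Ω.alg.IsLeibniz dM) :
    extCoextDiff Ω.t dM ∘ₗ contractCounit C.toDGCoalgebra H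
        + contractCounit C.toDGCoalgebra H ∘ₗ extCoextDiff Ω.t dM
      = LinearMap.id - Ω.extCoextIncl ∘ₗ extCoextCounit C.toDGCoalgebra Ω.alg M := by
  ext a c m
  have hcontract := contractCounit_extCoextDiff Ω.t dM H a c m
  have hmul := hH.apply_mul (parityOf Ω.alg.grading a) (Ω.t.toFun c) m
  rw [hH.apply_t, parityOf_parityOf] at hmul
  have hboundary := hH.boundary_apply hdM a m
  rw [extCoextBoundary_apply, add_assoc] at hboundary
  simp only [TensorProduct.AlgebraTensorModule.curry_apply, TensorProduct.curry_apply,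
    LinearMap.coe_restrictScalars, LinearMap.add_apply, LinearMap.sub_apply, LinearMap.comp_apply,
    LinearMap.id_apply, contractCounit_tmul, extCoextCounit_tmul, map_smul, hcontract, hmul,
    eq_sub_of_add_eq' hboundary, smul_sub, TensorProduct.smul_tmul', smul_eq_mul, mul_one,
    smul_comm a (C.counit c)]
  abel

end Homotopy

end CobarData

/-! ### The unit -/

section QuasiIso

variable {V W : Type} [AddCommGroup V] [Module ℚ V] [AddCommGroup W] [Module ℚ W]
  {dV : V →ₗ[ℚ] V} {dW : W →ₗ[ℚ] W}

theorem isQuasiIso_of_homotopy {g : W →ₗ[ℚ] V} {s : V →ₗ[ℚ] W} {h : W →ₗ[ℚ] W}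
    (hs : dW ∘ₗ s = s ∘ₗ dV) (hgs : g ∘ₗ s = LinearMap.id)
    (hh : dW ∘ₗ h + h ∘ₗ dW = LinearMap.id - s ∘ₗ g) : IsQuasiIso dW dV g := by
  have hs' (v : V) : dW (s v) = s (dV v) := LinearMap.congr_fun hs v
  refine ⟨?_, fun v hv => ⟨s v, by rw [hs', hv, map_zero], 0, ?_⟩⟩
  · rintro w hw ⟨v, hv⟩
    have hhw : dW (h w) + h (dW w) = w - s (g w) := LinearMap.congr_fun hh w
    refine ⟨h w + s v, ?_⟩
    rw [map_add, hs', ← hv, ← sub_eq_iff_eq_add, ← hhw, hw, map_zero, add_zero]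
  · rw [map_zero, sub_eq_zero]
    exact (LinearMap.congr_fun hgs v).symm

theorem IsQuasiIso.of_comp_eq_id {g : W →ₗ[ℚ] V} {f : V →ₗ[ℚ] W} (hg : IsQuasiIso dW dV g)
    (hgd : g ∘ₗ dW = dV ∘ₗ g) (hfd : dW ∘ₗ f = f ∘ₗ dV) (hgf : g ∘ₗ f = LinearMap.id) :
    IsQuasiIso dV dW f := by
  have hgd' (w : W) : g (dW w) = dV (g w) := LinearMap.congr_fun hgd w
  have hfd' (v : V) : dW (f v) = f (dV v) := LinearMap.congr_fun hfd v
  have hgf' (v : V) : g (f v) = v := LinearMap.congr_fun hgf v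
  refine ⟨?_, fun w hw => ?_⟩
  · rintro v - ⟨w, hw⟩
    exact ⟨g w, by rw [← hgd', ← hw, hgf']⟩
  · have hgw : dV (g w) = 0 := by rw [← hgd', hw, map_zero]
    refine ⟨g w, hgw, hg.1 _ ?_ ⟨0, ?_⟩⟩
    · rw [map_sub, hw, hfd', hgw, map_zero, sub_zero]
    · rw [map_sub, hgf', sub_self, map_zero]

end QuasiIso

namespace CobarData

variable {C : CoaugDGCoalgebra} (Ω : CobarData C)

theorem isQuasiIso_extCoextCounit {M : Type} [AddCommGroup M] [Module ℚ M]
    [Module Ω.alg.carrier M] [IsScalarTower ℚ Ω.alg.carrier M] {dM : M →ₗ[ℚ] M}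
    (hdM : Ω.alg.IsLeibniz dM) :
    IsQuasiIso (extCoextDiff Ω.t dM) dM (extCoextCounit C.toDGCoalgebra Ω.alg M) := by
  obtain ⟨H, hH⟩ := Ω.exists_isContractingDerivation M
  refine isQuasiIso_of_homotopy (LinearMap.ext Ω.extCoextDiff_extCoextIncl)
    (LinearMap.ext fun m => ?_) (hH.homotopy hdM)
  simp [extCoextIncl_apply, extCoextCounit_tmul, C.counit_one]

section Unit

variable (N : DGComodule C.toDGCoalgebra)

theorem coextDiff_map_one_tmul (z : C.carrier ⊗[ℚ] N.carrier) :
    coextDiff C.toDGCoalgebra Ω.alg Ω.t (Ω.alg.carrier ⊗[ℚ] N.carrier)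
        (extDiff C.toDGCoalgebra Ω.alg Ω.t N.carrier N.d N.coact) (tensorAction Ω.alg _)
        (LinearMap.lTensor C.carrier (TensorProduct.mk ℚ Ω.alg.carrier N.carrier 1) z)
      = LinearMap.lTensor C.carrier (TensorProduct.mk ℚ Ω.alg.carrier N.carrier 1)
          (TensorProduct.map C.d LinearMap.id z + TensorProduct.map (parityOf C.grading) N.d z)
        + TensorProduct.map (parityOf C.grading) (twistTerm Ω.t 1)
          (coextCoact C.toDGCoalgebra N.carrier z - LinearMap.lTensor C.carrier N.coact z) := by
  induction z with
  | zero => simp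
  | add z z' hz hz' => simp only [map_add, map_sub, hz, hz']; abel
  | tmul c n =>
    let 𝓡 := Coalgebra.Repr.arbitrary ℚ c
    simp only [LinearMap.lTensor_tmul, TensorProduct.mk_apply, TensorProduct.map_tmul,
      LinearMap.id_apply, coextDiff_tmul Ω.t _ 𝓡, coextCoact_tmul 𝓡, extDiff_tmul, twistTerm_tmul,
      Ω.alg.d_one, Ω.alg.parityOf_one, TensorProduct.zero_tmul, TensorProduct.tmul_sub,
      TensorProduct.smul_tmul', smul_eq_mul, mul_one, one_mul, zero_add, map_add, map_sub, map_sum]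
    abel

theorem coextDiff_cobarUnit (n : N.carrier) :
    coextDiff C.toDGCoalgebra Ω.alg Ω.t (Ω.alg.carrier ⊗[ℚ] N.carrier)
        (extDiff C.toDGCoalgebra Ω.alg Ω.t N.carrier N.d N.coact) (tensorAction Ω.alg _)
        (cobarUnit C Ω N n) = cobarUnit C Ω N (N.d n) := by
  have hcoassoc : coextCoact C.toDGCoalgebra N.carrier (N.coact n)
      = LinearMap.lTensor C.carrier N.coact (N.coact n) := LinearMap.congr_fun N.coassoc n
  have hchain : N.coact (N.d n) = TensorProduct.map C.d LinearMap.id (N.coact n)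
      + TensorProduct.map (parityOf C.grading) N.d (N.coact n) :=
    LinearMap.congr_fun N.coact_chain n
  refine (Ω.coextDiff_map_one_tmul N (N.coact n)).trans ?_
  rw [hcoassoc, sub_self, map_zero, add_zero, ← hchain]
  rfl

theorem coextCoact_cobarUnit (n : N.carrier) :
    coextCoact C.toDGCoalgebra _ (cobarUnit C Ω N n)
      = TensorProduct.map LinearMap.id (cobarUnit C Ω N) (N.coact n) := by
  have hcoassoc : coextCoact C.toDGCoalgebra N.carrier (N.coact n)
      = LinearMap.lTensor C.carrier N.coact (N.coact n) := LinearMap.congr_fun N.coassoc n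
  refine (coextCoact_lTensor _ (N.coact n)).trans ?_
  rw [hcoassoc, ← LinearMap.lTensor_comp_apply]
  rfl

theorem extCoextCounit_comp_map_cobarUnit :
    extCoextCounit C.toDGCoalgebra Ω.alg (Ω.alg.carrier ⊗[ℚ] N.carrier)
      ∘ₗ TensorProduct.map LinearMap.id (cobarUnit C Ω N) = LinearMap.id := by
  have hcontract (a : Ω.alg.carrier) (z : C.carrier ⊗[ℚ] N.carrier) :
      extCoextCounit C.toDGCoalgebra Ω.alg (Ω.alg.carrier ⊗[ℚ] N.carrier)
          (a ⊗ₜ LinearMap.lTensor C.carrier (TensorProduct.mk ℚ Ω.alg.carrier N.carrier 1) z)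
        = a ⊗ₜ TensorProduct.lid ℚ _ (TensorProduct.map C.counit LinearMap.id z) := by
    induction z with
    | zero => simp
    | add z z' hz hz' => simp only [map_add, TensorProduct.tmul_add, hz, hz']
    | tmul c n => simp [extCoextCounit_tmul, TensorProduct.smul_tmul']
  ext a n
  exact (hcontract a (N.coact n)).trans
    (congrArg (a ⊗ₜ[ℚ] ·) (LinearMap.congr_fun N.counit_coact n))

end Unit

end CobarData

theorem cobar_unit_is_tEquiv_general (C : CoaugDGCoalgebra) (Ω : CobarData C)
    (N : DGComodule C.toDGCoalgebra) :
    IsQuasiIso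
      (V := Ω.alg.carrier ⊗[ℚ] N.carrier)
      (W := Ω.alg.carrier ⊗[ℚ] (C.carrier ⊗[ℚ] (Ω.alg.carrier ⊗[ℚ] N.carrier)))
      (extDiff C.toDGCoalgebra Ω.alg Ω.t N.carrier N.d N.coact)
      (extDiff C.toDGCoalgebra Ω.alg Ω.t
        (C.carrier ⊗[ℚ] (Ω.alg.carrier ⊗[ℚ] N.carrier))
        (coextDiff C.toDGCoalgebra Ω.alg Ω.t (Ω.alg.carrier ⊗[ℚ] N.carrier)
          (extDiff C.toDGCoalgebra Ω.alg Ω.t N.carrier N.d N.coact)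
          (extAction Ω.alg N.carrier))
        (coextCoact C.toDGCoalgebra (Ω.alg.carrier ⊗[ℚ] N.carrier)))
      (TensorProduct.map LinearMap.id (cobarUnit C Ω N)) := by
  have hLeibniz : Ω.alg.IsLeibniz
      (extDiff C.toDGCoalgebra Ω.alg Ω.t N.carrier N.d N.coact) :=
    isLeibniz_extDiff Ω.t N.d N.coact
  rw [extAction_eq_tensorAction]
  exact IsQuasiIso.of_comp_eq_id (Ω.isQuasiIso_extCoextCounit hLeibniz)
    (extCoextCounit_comp_extCoextDiff Ω.t _ hLeibniz)
    (extDiff_comp_map Ω.t (Ω.coextDiff_cobarUnit N) (Ω.coextCoact_cobarUnit N))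
    (Ω.extCoextCounit_comp_map_cobarUnit N)

end UnitOfAdjunction

/-- For a 2-reduced cocommutative dg coalgebra `C` and any left dg
`C`-comodule `N`, the unit `N → t_* t^! N` of the `(t^! ⊣ t_*)` adjunction is a
`t`-equivalence: the induced map `t^!N → t^!(t_* t^! N)` is a quasi-isomorphism of
`ΩC`-modules. -/
theorem cobar_unit_is_tEquiv (C : CoaugDGCoalgebra) (hred : C.TwoReduced)
    (hcc : C.toDGCoalgebra.Cocomm) (Ω : CobarData C) (N : DGComodule C.toDGCoalgebra) :
    IsQuasiIso
      (V := Ω.alg.carrier ⊗[ℚ] N.carrier)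
      (W := Ω.alg.carrier ⊗[ℚ] (C.carrier ⊗[ℚ] (Ω.alg.carrier ⊗[ℚ] N.carrier)))
      (extDiff C.toDGCoalgebra Ω.alg Ω.t N.carrier N.d N.coact)
      (extDiff C.toDGCoalgebra Ω.alg Ω.t
        (C.carrier ⊗[ℚ] (Ω.alg.carrier ⊗[ℚ] N.carrier))
        (coextDiff C.toDGCoalgebra Ω.alg Ω.t (Ω.alg.carrier ⊗[ℚ] N.carrier)
          (extDiff C.toDGCoalgebra Ω.alg Ω.t N.carrier N.d N.coact)
          (extAction Ω.alg N.carrier))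
        (coextCoact C.toDGCoalgebra (Ω.alg.carrier ⊗[ℚ] N.carrier)))
      (TensorProduct.map LinearMap.id (cobarUnit C Ω N)) :=
  cobar_unit_is_tEquiv_general C Ω N

end
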